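/- Let n ≥ 1 and consider periodic indexing j ∈ ℤ/nℤ. Let g : ℝ^p → ℝ^p be continuously differentiable and G : ℝ^p → ℝ differentiable with ∇G(v) = (Dg(v))ᵀ v for all v. Let U : ℝ^p → ℝ^p be differentiable and E : ℝ^p → ℝ differentiable with ∇E(v) = (DU(v))ᵀ v for all v. Define g*(x,y) = ∫₀¹ g(x + ξ(y − x)) dξ. Let Δx > 0, let v_j : ℝ → ℝ^p be differentiable for each j ∈ ℤ/nℤ, and let D_{j+1/2} : ℝ → Matrix(p,p,ℝ) take symmetric positive semidefinite values. Suppose that for each j and all t, (d/dt) U(v_j(t)) = −(1/Δx)[ f̂_{j+1/2}(t) − f̂_{j−1/2}(t) ], where f̂_{j+1/2}(t) = g*(v_j(t), v_{j+1}(t)) − ½ D_{j+1/2}(t)(v_{j+1}(t) − v_j(t)). Then the total discrete entropy is nonincreasing: for all t, (d/dt) Σ_{j ∈ ℤ/nℤ} E(v_j(t)) ≤ 0. -/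

import Mathlib

/-!
Writing `ψ(v) = v ⬝ g(v) - G(v)` for the entropy potential, compatibility of `(g, G)` gives
`∇ψ = g`, so the fundamental theorem of calculus on the segment from `x` to `y` yields Tadmor's
identity `(y - x) ⬝ g*(x, y) = ψ(y) - ψ(x)` (`sub_dotProduct_gstar`). The compatibility of `(U, E)`
gives `d/dt E(v_j) = v_j ⬝ d/dt U(v_j)`. Inserting the scheme and summing by parts over the periodic
grid leaves `(1/Δx) ∑ (v_{j+1} - v_j) ⬝ f̂_{j+1/2}`: the entropy-conservative part telescopes to zero
and the diffusive part is minus half a sum of positive semidefinite quadratic forms.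
-/

open Matrix

/-- Jacobian matrix of a map `g : ℝ^p → ℝ^p` at a point. -/
noncomputable def jac {p : ℕ} (g : (Fin p → ℝ) → (Fin p → ℝ)) (v : Fin p → ℝ) :
    Matrix (Fin p) (Fin p) ℝ :=
  Matrix.of fun i k => fderiv ℝ g v (Pi.single k 1) i

/-- Gradient (as a column vector) of a scalar function on ℝ^p. -/
noncomputable def grad {p : ℕ} (G : (Fin p → ℝ) → ℝ) (v : Fin p → ℝ) : Fin p → ℝ :=
  fun k => fderiv ℝ G v (Pi.single k 1)

/-- Tadmor's second-order entropy-conservative two-point flux. -/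
noncomputable def gstar {p : ℕ} (g : (Fin p → ℝ) → (Fin p → ℝ))
    (x y : Fin p → ℝ) : Fin p → ℝ :=
  ∫ ξ in (0:ℝ)..1, g (x + ξ • (y - x))

lemma jac_mulVec {p : ℕ} (g : (Fin p → ℝ) → (Fin p → ℝ)) (v w : Fin p → ℝ) :
    jac g v *ᵥ w = fderiv ℝ g v w := by
  have h : jac g v = LinearMap.toMatrix' (fderiv ℝ g v : (Fin p → ℝ) →ₗ[ℝ] (Fin p → ℝ)) := by
    ext i k
    simp [jac, LinearMap.toMatrix'_apply]
  rw [h, LinearMap.toMatrix'_mulVec]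
  rfl

lemma grad_dotProduct {p : ℕ} (G : (Fin p → ℝ) → ℝ) (v w : Fin p → ℝ) :
    grad G v ⬝ᵥ w = fderiv ℝ G v w := by
  conv_rhs => rw [pi_eq_sum_univ' w]
  simp only [map_sum, map_smul, smul_eq_mul, dotProduct, grad]
  refine Finset.sum_congr rfl fun k _ => ?_
  rw [mul_comm]

/-- The compatibility relation `∇G(v) = (Dg(v))ᵀ v`, paired with a direction `w`. -/
lemma fderiv_eq_dotProduct_of_compat {p : ℕ} {g : (Fin p → ℝ) → (Fin p → ℝ)}
    {G : (Fin p → ℝ) → ℝ} (hcompat : ∀ v, grad G v = (jac g v)ᵀ *ᵥ v) (v w : Fin p → ℝ) :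
    fderiv ℝ G v w = v ⬝ᵥ fderiv ℝ g v w := by
  rw [← grad_dotProduct, hcompat, ← jac_mulVec, mulVec_transpose, dotProduct_mulVec]

lemma hasDerivAt_dotProduct {p : ℕ} {a b : ℝ → Fin p → ℝ} {a' b' : Fin p → ℝ} {t : ℝ}
    (ha : HasDerivAt a a' t) (hb : HasDerivAt b b' t) :
    HasDerivAt (fun s => a s ⬝ᵥ b s) (a' ⬝ᵥ b t + a t ⬝ᵥ b') t := by
  rw [hasDerivAt_pi] at ha hb
  simp only [dotProduct, ← Finset.sum_add_distrib]
  exact HasDerivAt.fun_sum fun i _ => (ha i).mul (hb i)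

lemma dotProduct_intervalIntegral {p : ℕ} (w : Fin p → ℝ) {f : ℝ → Fin p → ℝ}
    (hf : Continuous f) :
    w ⬝ᵥ (∫ ξ in (0:ℝ)..1, f ξ) = ∫ ξ in (0:ℝ)..1, w ⬝ᵥ f ξ := by
  let L : (Fin p → ℝ) →L[ℝ] ℝ := ∑ i, w i • ContinuousLinearMap.proj i
  have hL : ∀ u, L u = w ⬝ᵥ u := fun u => by
    simp [L, dotProduct]
  simp only [← hL]
  exact (L.intervalIntegral_comp_comm (hf.intervalIntegrable 0 1)).symm

/-- Tadmor's identity: the jump of the entropy variables paired with the two-point flux is the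
jump of the entropy potential `v ⬝ g(v) - G(v)`. -/
lemma sub_dotProduct_gstar {p : ℕ} {g : (Fin p → ℝ) → (Fin p → ℝ)} {G : (Fin p → ℝ) → ℝ}
    (hg : ContDiff ℝ 1 g) (hG : Differentiable ℝ G)
    (hcompat : ∀ v, grad G v = (jac g v)ᵀ *ᵥ v) (x y : Fin p → ℝ) :
    (y - x) ⬝ᵥ gstar g x y = (y ⬝ᵥ g y - G y) - (x ⬝ᵥ g x - G x) := by
  have hgd : Differentiable ℝ g := hg.differentiable one_ne_zero
  have hseg : Continuous fun ξ : ℝ => g (x + ξ • (y - x)) :=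
    hg.continuous.comp (by fun_prop)
  have hderiv : ∀ ξ : ℝ, HasDerivAt
      (fun ξ : ℝ => (x + ξ • (y - x)) ⬝ᵥ g (x + ξ • (y - x)) - G (x + ξ • (y - x)))
      ((y - x) ⬝ᵥ g (x + ξ • (y - x))) ξ := by
    intro ξ
    have hz : HasDerivAt (fun ξ : ℝ => x + ξ • (y - x)) (y - x) ξ := by
      simpa using ((hasDerivAt_id ξ).smul_const (y - x)).const_add x
    have h1 := (hgd (x + ξ • (y - x))).hasFDerivAt.comp_hasDerivAt ξ hz
    have h2 := (hG (x + ξ • (y - x))).hasFDerivAt.comp_hasDerivAt ξ hz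
    have h3 := (hasDerivAt_dotProduct hz h1).sub h2
    rw [fderiv_eq_dotProduct_of_compat hcompat, add_sub_cancel_right] at h3
    exact h3
  rw [gstar, dotProduct_intervalIntegral _ hseg,
    intervalIntegral.integral_eq_sub_of_hasDerivAt (fun ξ _ => hderiv ξ)
      ((by simp only [dotProduct]; fun_prop : Continuous _).intervalIntegrable 0 1)]
  simp

/-- Global entropy decay of the entropy-stable scheme on a periodic grid with `n`
cells: summing the cell entropy inequalities, the total discrete entropy
`Σ_j E(v_j(t))` is nonincreasing. -/
theorem periodic_total_entropy_decay {p n : ℕ} [NeZero n]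
    (g : (Fin p → ℝ) → (Fin p → ℝ)) (G : (Fin p → ℝ) → ℝ)
    (hg : ContDiff ℝ 1 g) (hG : Differentiable ℝ G)
    (hcompat : ∀ v, grad G v = (jac g v)ᵀ *ᵥ v)
    (U : (Fin p → ℝ) → (Fin p → ℝ)) (E : (Fin p → ℝ) → ℝ)
    (hU : Differentiable ℝ U) (hE : Differentiable ℝ E)
    (hEU : ∀ w, grad E w = (jac U w)ᵀ *ᵥ w)
    (Δx : ℝ) (hΔx : 0 < Δx)
    (v : ZMod n → ℝ → (Fin p → ℝ)) (hv : ∀ j, Differentiable ℝ (v j))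
    (D : ZMod n → ℝ → Matrix (Fin p) (Fin p) ℝ)
    (hD : ∀ j t, (D j t).PosSemidef)
    (fhat : ZMod n → ℝ → (Fin p → ℝ))
    (hfhat : ∀ j t, fhat j t =
      gstar g (v j t) (v (j+1) t) - (1/2 : ℝ) • (D j t *ᵥ (v (j+1) t - v j t)))
    (hscheme : ∀ j t, deriv (fun s => U (v j s)) t =
      -(1/Δx) • (fhat j t - fhat (j-1) t)) :
    ∀ t, deriv (fun s => ∑ j : ZMod n, E (v j s)) t ≤ 0 := by
  intro t
  have hdE : ∀ j, HasDerivAt (fun s => E (v j s))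
      (v j t ⬝ᵥ (-(1/Δx) • (fhat j t - fhat (j-1) t))) t := by
    intro j
    have hvj := (hv j t).hasDerivAt
    have h1 := (hU (v j t)).hasFDerivAt.comp_hasDerivAt t hvj
    have h2 := (hE (v j t)).hasFDerivAt.comp_hasDerivAt t hvj
    have h3 : deriv (fun s => U (v j s)) t = _ := h1.deriv
    rw [fderiv_eq_dotProduct_of_compat hEU, ← h3, hscheme] at h2
    exact h2
  rw [(HasDerivAt.fun_sum fun j _ => hdE j).deriv]
  -- Summation by parts: shift the index in the terms containing `fhat (j - 1)`.
  have hshift : ∑ j, v j t ⬝ᵥ fhat (j-1) t = ∑ j, v (j+1) t ⬝ᵥ fhat j t := by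
    rw [← Equiv.sum_comp (Equiv.addRight (1 : ZMod n))]
    simp
  have htele : ∀ ψ : ZMod n → ℝ, ∑ j, ψ (j+1) = ∑ j, ψ j := fun ψ =>
    Equiv.sum_comp (Equiv.addRight (1 : ZMod n)) ψ
  have hcell : ∀ j, v (j+1) t ⬝ᵥ fhat j t - v j t ⬝ᵥ fhat j t ≤
      (v (j+1) t ⬝ᵥ g (v (j+1) t) - G (v (j+1) t)) - (v j t ⬝ᵥ g (v j t) - G (v j t)) := by
    intro j
    have hq := (hD j t).dotProduct_mulVec_nonneg (v (j+1) t - v j t)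
    rw [star_trivial] at hq
    rw [← sub_dotProduct, hfhat, dotProduct_sub, dotProduct_smul, smul_eq_mul,
      sub_dotProduct_gstar hg hG hcompat]
    linarith
  have hsum := Finset.sum_le_sum fun j (_ : j ∈ Finset.univ) => hcell j
  rw [Finset.sum_sub_distrib, Finset.sum_sub_distrib,
    htele (fun j => v j t ⬝ᵥ g (v j t) - G (v j t)), sub_self] at hsum
  simp only [dotProduct_smul, dotProduct_sub, smul_eq_mul]
  rw [← Finset.mul_sum, Finset.sum_sub_distrib, hshift]
  have hpos : 0 < 1 / Δx := by positivity
  nlinarith
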